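/- Let 𝒮 be any one of the classes 𝒞, 𝒫, 𝒢, 𝒵 of compact metric spaces (connected, path-connected, geodesic, CAT(0), respectively), viewed as a subspace of the Gromov–Hausdorff space. Let n ≥ 1, m ≥ 2, let H be a compact metrizable space with n+1 distinct points v_1, …, v_{n+1}, and set H^× = H \ {v_1, …, v_{n+1}}. Let (X_1,d_1), …, (X_{n+1},d_{n+1}) ∈ 𝒮 satisfy d_GH((X_i,d_i),(X_j,d_j)) > 0 for all distinct i, j. Then there exists a continuous map F : H × {1,…,m} → 𝒮 (where {1,…,m} carries the discrete topology) such that (1) F(v_i, j) = (X_i,d_i) for all i ∈ {1,…,n+1} and j ∈ {1,…,m}, and (2) F is injective on H^× × {1,…,m}. -/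

import Mathlib

open GromovHausdorff

/-- A metric space is *geodesic* if any two points `x, y` are joined by a
geodesic, i.e. a map `γ : [0,1] → X` with `γ 0 = x`, `γ 1 = y` and
`dist (γ s) (γ t) = |s - t| * dist x y`. -/
def IsGeodesicSpace (X : Type*) [MetricSpace X] : Prop :=
  ∀ x y : X, ∃ γ : ℝ → X, γ 0 = x ∧ γ 1 = y ∧
    ∀ s ∈ Set.Icc (0 : ℝ) 1, ∀ t ∈ Set.Icc (0 : ℝ) 1,
      dist (γ s) (γ t) = |s - t| * dist x y

/-- A metric space is *CAT(0)* if it is geodesic and every geodesic triangle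
satisfies the Euclidean comparison inequality; equivalently (the formulation
used here), the comparison (CN) inequality holds along every geodesic. -/
def IsCAT0Space (X : Type*) [MetricSpace X] : Prop :=
  IsGeodesicSpace X ∧
  ∀ x y z : X, ∀ γ : ℝ → X, γ 0 = x → γ 1 = y →
    (∀ s ∈ Set.Icc (0 : ℝ) 1, ∀ t ∈ Set.Icc (0 : ℝ) 1,
      dist (γ s) (γ t) = |s - t| * dist x y) →
    ∀ t ∈ Set.Icc (0 : ℝ) 1,
      dist z (γ t) ^ 2 ≤
        (1 - t) * dist z x ^ 2 + t * dist z y ^ 2 - t * (1 - t) * dist x y ^ 2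

/-- The subset `𝒞` of the Gromov–Hausdorff space of connected spaces. -/
def GHConnected : Set GHSpace := {p | ConnectedSpace p.Rep}

/-- The subset `𝒫` of the Gromov–Hausdorff space of path-connected spaces. -/
def GHPathConnected : Set GHSpace := {p | PathConnectedSpace p.Rep}

/-- The subset `𝒢` of the Gromov–Hausdorff space of geodesic spaces. -/
def GHGeodesic : Set GHSpace := {p | IsGeodesicSpace p.Rep}

/-- The subset `𝒵` of the Gromov–Hausdorff space of CAT(0) spaces. -/
def GHCat0 : Set GHSpace := {p | IsCAT0Space p.Rep}



/-! ### Geodesic / CAT(0) subsets -/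

/-- A subset `A` of a metric space in which any two points are joined by a geodesic inside `A`,
which moreover satisfies the (CN) inequality (if `c` holds). -/
def GeoSet (c : Prop) {E : Type*} [MetricSpace E] (A : Set E) : Prop :=
  ∀ x ∈ A, ∀ y ∈ A, ∃ γ : ℝ → E, γ 0 = x ∧ γ 1 = y ∧
    (∀ t ∈ Set.Icc (0 : ℝ) 1, γ t ∈ A) ∧
    (∀ s ∈ Set.Icc (0 : ℝ) 1, ∀ t ∈ Set.Icc (0 : ℝ) 1,
      dist (γ s) (γ t) = |s - t| * dist x y) ∧
    (c → ∀ z ∈ A, ∀ t ∈ Set.Icc (0 : ℝ) 1,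
      dist z (γ t) ^ 2 ≤
        (1 - t) * dist z x ^ 2 + t * dist z y ^ 2 - t * (1 - t) * dist x y ^ 2)

lemma GeoSet.isGeodesicSpace {c : Prop} {E : Type*} [MetricSpace E] {A : Set E}
    (h : GeoSet c A) : IsGeodesicSpace A := by
  rintro ⟨x, hx⟩ ⟨y, hy⟩
  obtain ⟨γ, h0, h1, hA, hd, -⟩ := h x hx y hy
  refine ⟨fun t => ⟨γ (Set.projIcc 0 1 zero_le_one t), hA _ (Subtype.mem _)⟩, ?_, ?_, ?_⟩
  · apply Subtype.ext
    simp [h0]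
  · apply Subtype.ext
    simp [h1]
  · intro s hs t ht
    rw [Subtype.dist_eq, Subtype.dist_eq]
    simp only [Set.projIcc_of_mem zero_le_one hs, Set.projIcc_of_mem zero_le_one ht]
    exact hd s hs t ht

lemma GeoSet.isCAT0Space {E : Type*} [MetricSpace E] {A : Set E}
    (h : GeoSet True A) : IsCAT0Space A := by
  refine ⟨h.isGeodesicSpace, ?_⟩
  rintro ⟨x, hx⟩ ⟨y, hy⟩ ⟨z, hz⟩ γ' h0' h1' hd' t ht
  obtain ⟨γ, h0, h1, hA, hd, hc⟩ := h x hx y hy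
  have key : (γ' t : E) = γ t := by
    have hcn := hc trivial (γ' t) (γ' t).2 t ht
    have e0 : dist (γ' t : E) x = t * dist x y := by
      have := hd' t ht 0 (by simp)
      rw [h0'] at this
      simpa [Subtype.dist_eq, abs_of_nonneg ht.1] using this
    have e1 : dist (γ' t : E) y = (1 - t) * dist x y := by
      have := hd' t ht 1 (by simp)
      rw [h1'] at this
      rw [abs_sub_comm, abs_of_nonneg (by linarith [ht.2] : (0:ℝ) ≤ 1 - t)] at this
      simpa [Subtype.dist_eq] using this
    rw [e0, e1] at hcn
    have : dist (γ' t : E) (γ t) ^ 2 ≤ 0 := by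
      refine hcn.trans (le_of_eq ?_)
      ring
    have h2 : dist (γ' t : E) (γ t) = 0 := by
      have := le_antisymm this (sq_nonneg _)
      simpa using this
    exact dist_eq_zero.1 h2
  simp only [Subtype.dist_eq]
  rw [key]
  exact hc trivial z hz t ht

lemma IsGeodesicSpace.geoSet {X E : Type*} [MetricSpace X] [MetricSpace E]
    (h : IsGeodesicSpace X) {f : X → E} (hf : Isometry f) : GeoSet False (Set.range f) := by
  rintro _ ⟨x, rfl⟩ _ ⟨y, rfl⟩
  obtain ⟨γ, h0, h1, hd⟩ := h x y
  refine ⟨fun t => f (γ t), by simp only [h0], by simp only [h1], fun t _ => ⟨_, rfl⟩, ?_, fun h => h.elim⟩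
  intro s hs t ht
  rw [hf.dist_eq, hf.dist_eq]
  exact hd s hs t ht

lemma IsCAT0Space.geoSet {X E : Type*} [MetricSpace X] [MetricSpace E]
    (h : IsCAT0Space X) {f : X → E} (hf : Isometry f) : GeoSet True (Set.range f) := by
  rintro _ ⟨x, rfl⟩ _ ⟨y, rfl⟩
  obtain ⟨γ, h0, h1, hd⟩ := h.1 x y
  refine ⟨fun t => f (γ t), by simp only [h0], by simp only [h1], fun t _ => ⟨_, rfl⟩, ?_, ?_⟩
  · intro s hs t ht
    rw [hf.dist_eq, hf.dist_eq]
    exact hd s hs t ht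
  · rintro - _ ⟨z, rfl⟩ t ht
    simp only [hf.dist_eq]
    exact h.2 x y z γ h0 h1 hd t ht

lemma GeoSet.image {c : Prop} {X E : Type*} [MetricSpace X] [MetricSpace E] {A : Set X}
    (h : GeoSet c A) {f : X → E} (hf : Isometry f) : GeoSet c (f '' A) := by
  rintro _ ⟨x, hx, rfl⟩ _ ⟨y, hy, rfl⟩
  obtain ⟨γ, h0, h1, hA, hd, hc⟩ := h x hx y hy
  refine ⟨fun t => f (γ t), by simp only [h0], by simp only [h1], fun t ht => ⟨_, hA t ht, rfl⟩, ?_, ?_⟩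
  · intro s hs t ht
    rw [hf.dist_eq, hf.dist_eq]
    exact hd s hs t ht
  · rintro h _ ⟨z, hz, rfl⟩ t ht
    simp only [hf.dist_eq]
    exact hc h z hz t ht

/-- Intervals are CAT(0). -/
lemma geoSet_Icc (c : Prop) (a b : ℝ) : GeoSet c (Set.Icc a b) := by
  intro x hx y hy
  refine ⟨fun t => (1 - t) * x + t * y, by simp, by simp, ?_, ?_, ?_⟩
  · intro t ht
    have := (convex_Icc a b) hx hy (by linarith [ht.2] : (0:ℝ) ≤ 1 - t) ht.1 (by ring)
    simpa using this
  · intro s hs t ht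
    rw [Real.dist_eq, Real.dist_eq, ← abs_mul, abs_eq_abs]
    right; ring
  · intro _ z hz t ht
    simp only [Real.dist_eq, sq_abs]
    apply le_of_eq
    ring

/-- The key estimate for geodesics passing through a gluing point. -/
lemma wedge_cn_aux {a b t t' f e q g D : ℝ} (ha : 0 < a) (hb : 0 < b) (hD : D = a + b)
    (ht : 0 ≤ t) (htt : t' * a = t * D)
    (hf : |e - a| ≤ f) (hq : q = e + b)
    (hg : g ≤ (1 - t') * f ^ 2 + t' * e ^ 2 - t' * (1 - t') * a ^ 2) :
    g ≤ (1 - t) * f ^ 2 + t * q ^ 2 - t * (1 - t) * D ^ 2 := by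
  have h1 : (e - a) ^ 2 ≤ f ^ 2 := by
    rw [← sq_abs (e - a)]
    exact pow_le_pow_left₀ (abs_nonneg _) hf 2
  have ht' : t' = t * D / a := by field_simp; exact htt
  have h2 : t' - t = t * b / a := by rw [ht', hD]; field_simp; ring
  have h3 : 0 ≤ t' - t := by rw [h2]; positivity
  have h4 : (1 - t) * f ^ 2 + t * q ^ 2 - t * (1 - t) * D ^ 2
      - ((1 - t') * f ^ 2 + t' * e ^ 2 - t' * (1 - t') * a ^ 2)
      = (t' - t) * (f ^ 2 - (e - a) ^ 2) := by
    rw [ht', hq, hD]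
    field_simp
    ring
  have h5 : 0 ≤ (t' - t) * (f ^ 2 - (e - a) ^ 2) := mul_nonneg h3 (by linarith)
  linarith

/-- Gluing of geodesic (CAT(0)) sets along a common point. -/
lemma geoSet_wedge {c : Prop} {ι E : Type*} [MetricSpace E] (o : E) (A : ι → Set E)
    (hA : ∀ i, GeoSet c (A i)) (ho : ∀ i, o ∈ A i)
    (hd : ∀ i j, i ≠ j → ∀ x ∈ A i, ∀ y ∈ A j, dist x y = dist x o + dist o y) :
    GeoSet c (⋃ i, A i) := by
  -- same piece
  have same : ∀ i, ∀ x ∈ A i, ∀ y ∈ A i, ∃ γ : ℝ → E, γ 0 = x ∧ γ 1 = y ∧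
    (∀ t ∈ Set.Icc (0 : ℝ) 1, γ t ∈ ⋃ i, A i) ∧
    (∀ s ∈ Set.Icc (0 : ℝ) 1, ∀ t ∈ Set.Icc (0 : ℝ) 1,
      dist (γ s) (γ t) = |s - t| * dist x y) ∧
    (c → ∀ z ∈ ⋃ i, A i, ∀ t ∈ Set.Icc (0 : ℝ) 1,
      dist z (γ t) ^ 2 ≤
        (1 - t) * dist z x ^ 2 + t * dist z y ^ 2 - t * (1 - t) * dist x y ^ 2) := by
    intro i x hx y hy
    obtain ⟨γ, h0, h1, hγ, hg, hc⟩ := hA i x hx y hy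
    refine ⟨γ, h0, h1, fun t ht => Set.mem_iUnion.2 ⟨i, hγ t ht⟩, hg, ?_⟩
    intro hcc z hz t ht
    obtain ⟨k, hk⟩ := Set.mem_iUnion.1 hz
    by_cases hki : k = i
    · subst hki
      exact hc hcc z hk t ht
    · rw [hd k i hki z hk _ (hγ t ht), hd k i hki z hk _ hx, hd k i hki z hk _ hy]
      have hcn := hc hcc o (ho i) t ht
      set p := dist o (γ t)
      set u := dist o x
      set w := dist o y
      set d := dist x y
      have hduw : |u - w| ≤ d := by
        simp only [u, w, d]
        rw [dist_comm o x, dist_comm o y]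
        exact abs_dist_sub_le x y o
      have hsq : (u - w) ^ 2 ≤ d ^ 2 := by
        rw [← sq_abs (u - w)]
        exact pow_le_pow_left₀ (abs_nonneg _) hduw 2
      have ht1 : 0 ≤ 1 - t := by linarith [ht.2]
      have hp : p ≤ (1 - t) * u + t * w := by
        have ht0 := ht.1
        refine (le_abs_self p).trans (abs_le_of_sq_le_sq ?_ (by positivity))
        have : 0 ≤ t * (1 - t) * (d ^ 2 - (u - w) ^ 2) :=
          mul_nonneg (mul_nonneg ht.1 ht1) (by linarith)
        nlinarith
      have hz0 : 0 ≤ dist z o := dist_nonneg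
      nlinarith [mul_le_mul_of_nonneg_left hp hz0]
  intro x hx y hy
  obtain ⟨i, hi⟩ := Set.mem_iUnion.1 hx
  obtain ⟨j, hj⟩ := Set.mem_iUnion.1 hy
  by_cases hij : i = j
  · subst hij
    exact same i x hi y hj
  by_cases hxo : x = o
  · exact same j x (hxo ▸ ho j) y hj
  by_cases hyo : y = o
  · exact same i x hi y (hyo ▸ ho i)
  obtain ⟨γ₁, h0, h1, hγ, hg, hc⟩ := hA i x hi o (ho i)
  obtain ⟨γ₂, h0', h1', hγ', hg', hc'⟩ := hA j y hj o (ho j)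
  have ha : 0 < dist x o := dist_pos.2 hxo
  have hb : 0 < dist y o := dist_pos.2 hyo
  have hD := hd i j hij x hi y hj
  rw [dist_comm o y] at hD
  set a := dist x o with ha_def
  set b := dist y o with hb_def
  set D := dist x y with hD_def
  have hDpos : 0 < D := by linarith
  -- one half
  have half : ∀ i j, i ≠ j → ∀ x ∈ A i, ∀ y ∈ A j, 0 < dist x o → 0 < dist y o →
      ∀ γ : ℝ → E, (∀ t ∈ Set.Icc (0 : ℝ) 1, γ t ∈ A i) →
      γ 1 = o →
      (∀ s ∈ Set.Icc (0 : ℝ) 1, ∀ t ∈ Set.Icc (0 : ℝ) 1,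
        dist (γ s) (γ t) = |s - t| * dist x o) →
      (∀ z ∈ A i, ∀ t ∈ Set.Icc (0 : ℝ) 1,
      dist z (γ t) ^ 2 ≤
        (1 - t) * dist z x ^ 2 + t * dist z o ^ 2 - t * (1 - t) * dist x o ^ 2) →
      ∀ z ∈ ⋃ i, A i, ∀ t t' : ℝ, 0 ≤ t → t' ∈ Set.Icc (0 : ℝ) 1 → 
        t' * dist x o = t * dist x y → 
        dist z (γ t') ^ 2 ≤
        (1 - t) * dist z x ^ 2 + t * dist z y ^ 2 - t * (1 - t) * dist x y ^ 2 := by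
    intro i j hij x hi y hj ha hb γ hγ h1 hg hc z hz t t' ht ht' htt
    obtain ⟨k, hk⟩ := Set.mem_iUnion.1 hz
    have hD := hd i j hij x hi y hj
    rw [dist_comm o y] at hD
    by_cases hki : k = i
    · subst hki
      refine wedge_cn_aux ha hb hD ht htt ?_ ?_ (hc z hk t' ht')
      · rw [dist_comm z o, dist_comm x o, dist_comm z x, dist_comm x z]
        rw [dist_comm o z, dist_comm o x]
        exact abs_dist_sub_le z x o
      · rw [hd k j hij z hk y hj, dist_comm o y]
    · rw [hd k i hki z hk _ (hγ t' ht'), hd k i hki z hk x hi]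
      have e1 : dist o (γ t') = dist x o - t * dist x y := by
        have := hg 1 (by simp) t' ht'
        rw [h1, abs_of_nonneg (by linarith [ht'.2] : (0:ℝ) ≤ 1 - t')] at this
        rw [this, ← htt]; ring
      rw [e1, dist_comm o x]
      have h2 : |dist z o - dist y o| ≤ dist z y := abs_dist_sub_le z y o
      have h3 : (dist z o - dist y o) ^ 2 ≤ dist z y ^ 2 := by
        rw [← sq_abs (dist z o - dist y o)]
        exact pow_le_pow_left₀ (abs_nonneg _) h2 2
      have h4 := mul_le_mul_of_nonneg_left h3 ht
      rw [hD]
      nlinarith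
  have r1 : ∀ t, 0 ≤ t → t * D ≤ a → t * D / a ∈ Set.Icc (0:ℝ) 1 := by
    intro t ht hta
    refine ⟨by positivity, ?_⟩
    rw [div_le_one ha]; exact hta
  have r2 : ∀ t, t ≤ 1 → a ≤ t * D → (1 - t) * D / b ∈ Set.Icc (0:ℝ) 1 := by
    intro t ht hta
    have : 0 ≤ 1 - t := by linarith
    refine ⟨by positivity, ?_⟩
    rw [div_le_one hb]; linarith
  have d1 : ∀ t, 0 ≤ t → t * D ≤ a → dist (γ₁ (t * D / a)) o = a - t * D := by
    intro t ht hta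
    have := hg (t * D / a) (r1 t ht hta) 1 (by simp)
    rw [h1, abs_sub_comm, abs_of_nonneg (by linarith [(r1 t ht hta).2])] at this
    rw [this]; field_simp
  have d2 : ∀ t, t ≤ 1 → a ≤ t * D → dist o (γ₂ ((1 - t) * D / b)) = t * D - a := by
    intro t ht hta
    have := hg' ((1 - t) * D / b) (r2 t ht hta) 1 (by simp)
    rw [h1', abs_sub_comm, abs_of_nonneg (by linarith [(r2 t ht hta).2])] at this
    rw [dist_comm, this]; field_simp; linarith
  let γ : ℝ → E := fun t => if t * D ≤ a then γ₁ (t * D / a) else γ₂ ((1 - t) * D / b)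
  have hγ1 : ∀ t, t * D ≤ a → γ t = γ₁ (t * D / a) := fun t h => if_pos h
  have hγ2 : ∀ t, a < t * D → γ t = γ₂ ((1 - t) * D / b) := fun t h => if_neg (not_le.2 h)
  refine ⟨γ, ?_, ?_, ?_, ?_, ?_⟩
  · rw [hγ1 0 (by linarith)]; simpa using h0
  · rw [hγ2 1 (by linarith)]; simpa using h0'
  · intro t ht
    rcases le_or_gt (t * D) a with h | h
    · rw [hγ1 t h]
      exact Set.mem_iUnion.2 ⟨i, hγ _ (r1 t ht.1 h)⟩
    · rw [hγ2 t h]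
      exact Set.mem_iUnion.2 ⟨j, hγ' _ (r2 t ht.2 h.le)⟩
  · have mixed : ∀ s ∈ Set.Icc (0 : ℝ) 1, ∀ t ∈ Set.Icc (0 : ℝ) 1, s * D ≤ a → a < t * D →
        dist (γ s) (γ t) = |s - t| * D := by
      intro s hs t ht h h'
      rw [hγ1 s h, hγ2 t h', hd i j hij _ (hγ _ (r1 s hs.1 h)) _ (hγ' _ (r2 t ht.2 h'.le)),
        d1 s hs.1 h, d2 t ht.2 h'.le]
      have : s ≤ t := by
        by_contra hlt
        push Not at hlt
        nlinarith
      rw [abs_sub_comm, abs_of_nonneg (by linarith)]; ring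
    intro s hs t ht
    rcases le_or_gt (s * D) a with h | h <;> rcases le_or_gt (t * D) a with h' | h'
    · rw [hγ1 s h, hγ1 t h', hg _ (r1 s hs.1 h) _ (r1 t ht.1 h')]
      have : s * D / a - t * D / a = (s - t) * (D / a) := by ring
      rw [this, abs_mul, abs_of_pos (by positivity : 0 < D / a)]
      field_simp
    · exact mixed s hs t ht h h'
    · rw [dist_comm, abs_sub_comm]
      exact mixed t ht s hs h' h
    · rw [hγ2 s h, hγ2 t h', hg' _ (r2 s hs.2 h.le) _ (r2 t ht.2 h'.le)]
      have : (1 - s) * D / b - (1 - t) * D / b = (t - s) * (D / b) := by ring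
      rw [this, abs_mul, abs_of_pos (by positivity : 0 < D / b), abs_sub_comm]
      field_simp
  · intro hcc z hz t ht
    rcases le_or_gt (t * D) a with h | h
    · rw [hγ1 t h]
      exact half i j hij x hi y hj ha hb γ₁ hγ h1 hg (hc hcc) z hz t _ ht.1 (r1 t ht.1 h)
        (div_mul_cancel₀ _ ha.ne')
    · rw [hγ2 t h]
      have := half j i (Ne.symm hij) y hj x hi hb ha γ₂ hγ' h1' hg' (hc' hcc) z hz (1 - t) _
        (by linarith [ht.2]) (r2 t ht.2 h.le)
        (by rw [dist_comm y x]; exact div_mul_cancel₀ _ hb.ne')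
      rw [dist_comm y x] at this
      refine this.trans (le_of_eq ?_)
      ring


/-! ### The ambient space -/

/-- The ambient space in which all our compact sets live. -/
abbrev AmbSp (ι E₀ : Type*) [Fintype ι] [NormedAddCommGroup E₀] : Type _ :=
  WithLp 1 (PiLp 2 (fun _ : ι => E₀) × lp (fun _ : ℕ => ℝ) 1)

section Ambient

variable {ι E₀ : Type*} [Fintype ι] [NormedAddCommGroup E₀]

/-- Embedding of the product part. -/
noncomputable def embY (y : ι → E₀) : AmbSp ι E₀ := WithLp.toLp 1 (WithLp.toLp 2 y, 0)

/-- Embedding of the `k`-th leg. -/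
noncomputable def embL (ι E₀ : Type*) [Fintype ι] [NormedAddCommGroup E₀] (k : ℕ) (t : ℝ) :
    AmbSp ι E₀ := WithLp.toLp 1 (0, lp.single 1 k t)

lemma embY_zero : embY (0 : ι → E₀) = 0 := rfl

lemma embL_zero (k : ℕ) : embL ι E₀ k 0 = 0 := by
  unfold embL
  rw [lp.single_zero]
  rfl

lemma dist_embY_sq (y y' : ι → E₀) :
    dist (embY y) (embY y') ^ 2 = ∑ i, dist (y i) (y' i) ^ 2 := by
  unfold embY
  rw [WithLp.prod_dist_eq_of_L1]
  change (dist (WithLp.toLp 2 y) (WithLp.toLp 2 y') + dist (0 : lp (fun _ : ℕ => ℝ) 1) 0) ^ 2 = _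
  rw [dist_self, add_zero, PiLp.dist_sq_eq_of_L2]

lemma dist_embL (k : ℕ) (t u : ℝ) : dist (embL ι E₀ k t) (embL ι E₀ k u) = |t - u| := by
  unfold embL
  rw [WithLp.prod_dist_eq_of_L1]
  change dist (0 : PiLp 2 (fun _ : ι => E₀)) 0 + dist (lp.single 1 k t : lp (fun _ : ℕ => ℝ) 1)
    (lp.single 1 k u) = _
  rw [dist_self, zero_add, (lp.isometry_single (E := fun _ : ℕ => ℝ) (p := 1) k).dist_eq, Real.dist_eq]

lemma dist_embL_zero (k : ℕ) (t : ℝ) : dist (embL ι E₀ k t) 0 = |t| := by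
  rw [← embL_zero k, dist_embL, sub_zero]

lemma norm_single_sub_single {k j : ℕ} (h : k ≠ j) (t u : ℝ) :
    ‖(lp.single 1 k t : lp (fun _ : ℕ => ℝ) 1) - lp.single 1 j u‖ = |t| + |u| := by
  rw [lp.norm_eq_tsum_rpow (by simp)]
  simp only [ENNReal.toReal_one, Real.rpow_one, div_one]
  rw [tsum_eq_sum (s := {k, j}), Finset.sum_pair h]
  · simp [lp.single_apply, h, h.symm]
  · intro b hb
    simp only [Finset.mem_insert, Finset.mem_singleton, not_or] at hb
    simp [hb.1, hb.2]

lemma dist_embL_ne {k j : ℕ} (h : k ≠ j) (t u : ℝ) :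
    dist (embL ι E₀ k t) (embL ι E₀ j u) = |t| + |u| := by
  unfold embL
  rw [WithLp.prod_dist_eq_of_L1]
  change dist (0 : PiLp 2 (fun _ : ι => E₀)) 0 + dist (lp.single 1 k t : lp (fun _ : ℕ => ℝ) 1)
    (lp.single 1 j u) = _
  rw [dist_self, zero_add, dist_eq_norm, norm_single_sub_single h]

lemma dist_embY_embL (y : ι → E₀) (k : ℕ) (t : ℝ) :
    dist (embY y) (embL ι E₀ k t) = dist (embY y) 0 + |t| := by
  unfold embY embL
  rw [WithLp.prod_dist_eq_of_L1, WithLp.prod_dist_eq_of_L1]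
  simp [lp.norm_single]

lemma continuous_embY : Continuous (embY : (ι → E₀) → AmbSp ι E₀) := by
  unfold embY
  fun_prop

lemma continuous_embL (k : ℕ) : Continuous (embL ι E₀ k) := by
  refine Isometry.continuous (Isometry.of_dist_eq fun t u => ?_)
  rw [dist_embL, Real.dist_eq]

variable [NormedSpace ℝ E₀]

/-- The pieces of the space: the product part and the legs. -/
def pieceS (w : ι → ℝ) (K : ι → Set E₀) (l : ℕ → ℝ) : Option ℕ → Set (AmbSp ι E₀)
  | none => (fun a : ι → E₀ => embY (fun i => w i • a i)) '' (Set.univ.pi K)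
  | some k => embL ι E₀ k '' Set.Icc 0 (l k)

/-- The space. -/
def totS (w : ι → ℝ) (K : ι → Set E₀) (l : ℕ → ℝ) : Set (AmbSp ι E₀) :=
  ⋃ k, pieceS w K l k

lemma zero_mem_pieceS {w : ι → ℝ} {K : ι → Set E₀} {l : ℕ → ℝ} (hK : ∀ i, 0 ∈ K i)
    (hl : ∀ k, 0 ≤ l k) (k : Option ℕ) : 0 ∈ pieceS w K l k := by
  cases k with
  | none => 
    refine ⟨0, fun i _ => hK i, ?_⟩
    simp only [Pi.zero_apply, smul_zero]
    exact embY_zero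
  | some k => exact ⟨0, ⟨le_rfl, hl k⟩, embL_zero k⟩

lemma pieceS_dist {w : ι → ℝ} {K : ι → Set E₀} {l : ℕ → ℝ} (i j : Option ℕ) (hij : i ≠ j)
    (x : AmbSp ι E₀) (hx : x ∈ pieceS w K l i) (y : AmbSp ι E₀) (hy : y ∈ pieceS w K l j) :
    dist x y = dist x 0 + dist 0 y := by
  rw [dist_comm 0 y]
  cases i with
  | none =>
    cases j with
    | none => exact absurd rfl hij
    | some k =>
      obtain ⟨a, -, rfl⟩ := hx
      obtain ⟨t, -, rfl⟩ := hy
      rw [dist_embY_embL, dist_embL_zero]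
  | some k =>
    cases j with
    | none =>
      obtain ⟨a, -, rfl⟩ := hy
      obtain ⟨t, -, rfl⟩ := hx
      rw [dist_comm, dist_embY_embL, dist_embL_zero, add_comm]
    | some k' =>
      obtain ⟨t, -, rfl⟩ := hx
      obtain ⟨t', -, rfl⟩ := hy
      rw [dist_embL_ne (by rintro rfl; exact hij rfl), dist_embL_zero, dist_embL_zero]

lemma geoSet_piece_none {c : Prop} {w : ι → ℝ} {K : ι → Set E₀}
    {l : ℕ → ℝ} (h : ∀ i, GeoSet c (K i)) : GeoSet c (pieceS w K l none) := by
  rintro _ ⟨x, hx, rfl⟩ _ ⟨y, hy, rfl⟩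
  have hx' : ∀ i, x i ∈ K i := fun i => hx i trivial
  have hy' : ∀ i, y i ∈ K i := fun i => hy i trivial
  choose γ h0 h1 hA hd hc using fun i => h i (x i) (hx' i) (y i) (hy' i)
  refine ⟨fun t => embY (fun i => w i • γ i t), ?_, ?_, ?_, ?_, ?_⟩
  · simp only [h0]
  · simp only [h1]
  · intro t ht
    exact ⟨fun i => γ i t, fun i _ => hA i t ht, rfl⟩
  · intro s hs t ht
    rw [← abs_of_nonneg (dist_nonneg (x := embY fun i => w i • γ i s)
      (y := embY fun i => w i • γ i t)),
      ← abs_of_nonneg (dist_nonneg (x := embY fun i => w i • x i)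
      (y := embY fun i => w i • y i)), ← abs_mul]
    rw [← sq_eq_sq_iff_abs_eq_abs, mul_pow, dist_embY_sq, dist_embY_sq, Finset.mul_sum]
    refine Finset.sum_congr rfl fun i _ => ?_
    rw [dist_smul₀, dist_smul₀, hd i s hs t ht]
    simp only [mul_pow, sq_abs]
    ring
  · rintro hcc _ ⟨z, hz, rfl⟩ t ht
    have hz' : ∀ i, z i ∈ K i := fun i => hz i trivial
    simp only [dist_embY_sq, Finset.mul_sum]
    rw [← Finset.sum_add_distrib, ← Finset.sum_sub_distrib]
    refine Finset.sum_le_sum fun i _ => ?_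
    simp only [dist_smul₀, mul_pow]
    have := mul_le_mul_of_nonneg_left (hc i hcc (z i) (hz' i) t ht) (sq_nonneg ‖w i‖)
    refine this.trans (le_of_eq ?_)
    ring

lemma geoSet_totS {c : Prop} {w : ι → ℝ} {K : ι → Set E₀}
    {l : ℕ → ℝ} (h : ∀ i, GeoSet c (K i)) (hK : ∀ i, 0 ∈ K i)
    (hl : ∀ k, 0 ≤ l k) : GeoSet c (totS w K l) := by
  refine geoSet_wedge 0 _ ?_ (zero_mem_pieceS hK hl) pieceS_dist
  intro i
  cases i with
  | none => exact geoSet_piece_none h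
  | some k =>
    refine (geoSet_Icc c 0 (l k)).image ?_
    refine Isometry.of_dist_eq fun t u => ?_
    rw [dist_embL, Real.dist_eq]

lemma continuous_embY_smul (w : ι → ℝ) :
    Continuous (fun a : ι → E₀ => embY (fun i => w i • a i)) := by
  refine continuous_embY.comp ?_
  fun_prop

lemma isConnected_totS {w : ι → ℝ} {K : ι → Set E₀}
    {l : ℕ → ℝ} (h : ∀ i, IsConnected (K i)) (hK : ∀ i, 0 ∈ K i)
    (hl : ∀ k, 0 ≤ l k) : IsConnected (totS w K l) := by
  refine ⟨⟨0, Set.mem_iUnion.2 ⟨none, zero_mem_pieceS hK hl none⟩⟩, ?_⟩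
  refine isPreconnected_iUnion ⟨0, Set.mem_iInter.2 (zero_mem_pieceS hK hl)⟩ ?_
  intro i
  cases i with
  | none =>
    exact (isPreconnected_univ_pi fun i => (h i).isPreconnected).image _
      (continuous_embY_smul w).continuousOn
  | some k => exact isPreconnected_Icc.image _ (continuous_embL k).continuousOn

lemma isPathConnected_totS {w : ι → ℝ} {K : ι → Set E₀}
    {l : ℕ → ℝ} (h : ∀ i, IsPathConnected (K i)) (hK : ∀ i, 0 ∈ K i)
    (hl : ∀ k, 0 ≤ l k) : IsPathConnected (totS w K l) := by
  have hp : ∀ k, IsPathConnected (pieceS w K l k) := by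
    intro i
    cases i with
    | none =>
      refine IsPathConnected.image ?_ (continuous_embY_smul w)
      exact IsPathConnected.pi h
    | some k =>
      refine IsPathConnected.image ?_ (continuous_embL k)
      exact (convex_Icc 0 (l k)).isPathConnected ⟨0, le_rfl, hl k⟩
  refine ⟨0, Set.mem_iUnion.2 ⟨none, zero_mem_pieceS hK hl none⟩, ?_⟩
  intro y hy
  obtain ⟨k, hk⟩ := Set.mem_iUnion.1 hy
  exact ((hp k).joinedIn 0 (zero_mem_pieceS hK hl k) y hk).mono (Set.subset_iUnion _ k)

end Ambient

/-! ### The invariant -/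

/-- Points near which the space is one dimensional. -/
def goodSet (Z : Type*) [MetricSpace Z] : Set Z :=
  {z | ∃ r > 0, ∃ f : Z → ℝ, ∀ a ∈ Metric.ball z r, ∀ b ∈ Metric.ball z r,
    |f a - f b| = dist a b}

/-- The set of leg lengths. -/
def legInv (Z : Type*) [MetricSpace Z] : Set ℝ :=
  {d | ∃ z ∈ goodSet Z, Metric.infDist z (goodSet Z)ᶜ = d ∧
    ∃ r > 0, ∀ z' ∈ Metric.ball z r, Metric.infDist z' (goodSet Z)ᶜ ≤ d}

lemma goodSet_map {Z Z' : Type*} [MetricSpace Z] [MetricSpace Z'] (e : Z ≃ᵢ Z') {z : Z}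
    (hz : z ∈ goodSet Z) : e z ∈ goodSet Z' := by
  obtain ⟨r, hr, f, hf⟩ := hz
  refine ⟨r, hr, fun a => f (e.symm a), ?_⟩
  intro a ha b hb
  rw [hf (e.symm a) _ (e.symm b) _, e.symm.isometry.dist_eq]
  · rw [Metric.mem_ball] at ha ⊢
    rw [← e.isometry.dist_eq]; simpa using ha
  · rw [Metric.mem_ball] at hb ⊢
    rw [← e.isometry.dist_eq]; simpa using hb

lemma goodSet_map_iff {Z Z' : Type*} [MetricSpace Z] [MetricSpace Z'] (e : Z ≃ᵢ Z') {z : Z} :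
    e z ∈ goodSet Z' ↔ z ∈ goodSet Z :=
  ⟨fun h => by simpa using goodSet_map e.symm h, goodSet_map e⟩

lemma legInv_subset {Z Z' : Type*} [MetricSpace Z] [MetricSpace Z'] (e : Z ≃ᵢ Z') :
    legInv Z ⊆ legInv Z' := by
  have him : (goodSet Z')ᶜ = e '' (goodSet Z)ᶜ := by
    ext z'
    constructor
    · intro h
      refine ⟨e.symm z', fun h' => h ?_, by simp⟩
      simpa using goodSet_map e h'
    · rintro ⟨z, hz, rfl⟩ h'
      exact hz ((goodSet_map_iff e).1 h')
  have hinf : ∀ z, Metric.infDist (e z) (goodSet Z')ᶜ = Metric.infDist z (goodSet Z)ᶜ := by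
    intro z
    rw [him, Metric.infDist_image e.isometry]
  rintro d ⟨z, hz, hd, r, hr, h⟩
  refine ⟨e z, goodSet_map e hz, by rw [hinf, hd], r, hr, ?_⟩
  intro z' hz'
  have : z' = e (e.symm z') := by simp
  rw [this, hinf]
  apply h
  rw [Metric.mem_ball, ← e.isometry.dist_eq]
  simpa using hz'

lemma legInv_congr {Z Z' : Type*} [MetricSpace Z] [MetricSpace Z'] (e : Z ≃ᵢ Z') :
    legInv Z = legInv Z' :=
  (legInv_subset e).antisymm (legInv_subset e.symm)

/-- No right-angled isosceles triangle embeds in the line. -/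
lemma no_triangle {a b c δ q : ℝ} (hδ : 0 < δ) (h1 : |a - b| = δ) (h2 : |a - c| = δ)
    (h3 : |b - c| = q) (hq : q ^ 2 = 2 * δ ^ 2) : False := by
  have hq' : (b - c) ^ 2 = 2 * δ ^ 2 := by rw [← hq, ← h3, sq_abs]
  have : 0 < δ ^ 2 := by positivity
  rcases abs_eq hδ.le |>.1 h1 with h1 | h1 <;> rcases abs_eq hδ.le |>.1 h2 with h2 | h2
  · have : b - c = 0 := by linarith
    rw [this] at hq'; nlinarith
  · have : b - c = -2 * δ := by linarith
    rw [this] at hq'; nlinarith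
  · have : b - c = 2 * δ := by linarith
    rw [this] at hq'; nlinarith
  · have : b - c = 0 := by linarith
    rw [this] at hq'; nlinarith


section Invariant

variable {ι E₀ : Type*} [Fintype ι] [NormedAddCommGroup E₀] [NormedSpace ℝ E₀]

/-- In a segment one can always move by a small amount. -/
lemma exists_move {e : E₀} (he : ‖e‖ = 1) {δ : ℝ} (hδ : 0 < δ) (hδ' : δ ≤ 1 / 2) {a : E₀}
    (ha : a ∈ (fun t : ℝ => t • e) '' Set.Icc 0 1) :
    ∃ a' ∈ (fun t : ℝ => t • e) '' Set.Icc (0 : ℝ) 1, dist a a' = δ := by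
  obtain ⟨t, ht, rfl⟩ := ha
  rcases le_total t (1 / 2) with h | h
  · refine ⟨_, ⟨t + δ, ⟨by linarith [ht.1], by linarith⟩, rfl⟩, ?_⟩
    rw [dist_eq_norm, ← sub_smul, norm_smul, he, mul_one, Real.norm_eq_abs]
    rw [show t - (t + δ) = -δ by ring, abs_neg, abs_of_pos hδ]
  · refine ⟨_, ⟨t - δ, ⟨by linarith, by linarith [ht.2]⟩, rfl⟩, ?_⟩
    rw [dist_eq_norm, ← sub_smul, norm_smul, he, mul_one, Real.norm_eq_abs]
    rw [show t - (t - δ) = δ by ring, abs_of_pos hδ]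

lemma not_good_of_mem {w : ι → ℝ} {K : ι → Set E₀} {l : ℕ → ℝ} {s : ℝ} (hs : 0 < s)
    {i₀ i₁ : ι} (hi : i₀ ≠ i₁) (hw₀ : w i₀ = s) (hw₁ : w i₁ = s) {e : E₀} (he : ‖e‖ = 1)
    (hK₀ : K i₀ = (fun t : ℝ => t • e) '' Set.Icc (0 : ℝ) 1)
    (hK₁ : K i₁ = (fun t : ℝ => t • e) '' Set.Icc (0 : ℝ) 1)
    (z : totS w K l) (hz : (z : AmbSp ι E₀) ∈ pieceS w K l none) : z ∉ goodSet (totS w K l) := by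
  classical
  rintro ⟨r, hr, f, hf⟩
  obtain ⟨z, hzt⟩ := z
  obtain ⟨a, ha, rfl⟩ := hz
  have ha' : ∀ i, a i ∈ K i := fun i => ha i trivial
  set δ : ℝ := min (1 / 2) (r / (2 * s)) with hδdef
  have hδ : 0 < δ := by positivity
  have hδ2 : δ ≤ 1 / 2 := min_le_left _ _
  have hδr : s * δ < r := by
    have : δ ≤ r / (2 * s) := min_le_right _ _
    have h2 : s * δ ≤ s * (r / (2 * s)) := by gcongr
    have h3 : s * (r / (2 * s)) = r / 2 := by field_simp
    linarith
  obtain ⟨b, hb, hdb⟩ := exists_move he hδ hδ2 (hK₀ ▸ ha' i₀)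
  obtain ⟨c, hc, hdc⟩ := exists_move he hδ hδ2 (hK₁ ▸ ha' i₁)
  have hsδ : 0 < s * δ := by positivity
  have hmem : ∀ (i : ι) (b : E₀), b ∈ K i →
      embY (fun j => w j • Function.update a i b j) ∈ totS w K l := by
    intro i b hb
    refine Set.mem_iUnion.2 ⟨none, ⟨Function.update a i b, fun j _ => ?_, rfl⟩⟩
    by_cases hj : j = i
    · subst hj; simpa using hb
    · simpa [Function.update_of_ne hj] using ha' j
  have hdist : ∀ (i : ι) (b : E₀), w i = s → dist (a i) b = δ →
      dist (embY (fun j => w j • a j)) (embY (fun j => w j • Function.update a i b j)) = s * δ := by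
    intro i b hwi hb
    rw [← abs_of_nonneg (dist_nonneg (x := embY (fun j => w j • a j))), ← abs_of_pos hsδ,
      ← sq_eq_sq_iff_abs_eq_abs, dist_embY_sq, Finset.sum_eq_single i]
    · rw [dist_smul₀, Function.update_self, hb, hwi, Real.norm_eq_abs, abs_of_pos hs]
    · intro j _ hj
      rw [Function.update_of_ne hj]; simp
    · simp
  have hbc : dist (embY (fun j => w j • Function.update a i₀ b j))
      (embY (fun j => w j • Function.update a i₁ c j)) ^ 2 = 2 * (s * δ) ^ 2 := by
    rw [dist_embY_sq, Finset.sum_eq_add i₀ i₁ hi]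
    · rw [dist_smul₀, dist_smul₀, Function.update_self, Function.update_self,
        Function.update_of_ne hi, Function.update_of_ne hi.symm, dist_comm b, hdb, hdc, hw₀, hw₁,
        Real.norm_eq_abs, abs_of_pos hs]
      ring
    · intro j _ hj
      rw [Function.update_of_ne hj.1, Function.update_of_ne hj.2]; simp
    · simp
    · simp
  have hB := hdist i₀ b hw₀ hdb
  have hC := hdist i₁ c hw₁ hdc
  have e1 := hf ⟨_, hzt⟩ (Metric.mem_ball_self hr) ⟨_, hmem i₀ b (hK₀ ▸ hb)⟩
    (by rw [Metric.mem_ball, dist_comm, Subtype.dist_eq]; simp only; rw [hB]; exact hδr)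
  have e2 := hf ⟨_, hzt⟩ (Metric.mem_ball_self hr) ⟨_, hmem i₁ c (hK₁ ▸ hc)⟩
    (by rw [Metric.mem_ball, dist_comm, Subtype.dist_eq]; simp only; rw [hC]; exact hδr)
  have e3 := hf ⟨_, hmem i₀ b (hK₀ ▸ hb)⟩
    (by rw [Metric.mem_ball, dist_comm, Subtype.dist_eq]; simp only; rw [hB]; exact hδr)
    ⟨_, hmem i₁ c (hK₁ ▸ hc)⟩
    (by rw [Metric.mem_ball, dist_comm, Subtype.dist_eq]; simp only; rw [hC]; exact hδr)
  rw [Subtype.dist_eq] at e1 e2 e3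
  simp only at e1 e2 e3
  rw [hB] at e1
  rw [hC] at e2
  exact no_triangle hsδ e1 e2 e3 hbc

/-- Near a point of a leg there are only points of the leg. -/
lemma mem_leg_of_dist_lt {w : ι → ℝ} {K : ι → Set E₀} {l : ℕ → ℝ} {k : ℕ} {t : ℝ}
    (ht : 0 < t) (htl : t ≤ l k) {a : AmbSp ι E₀} (ha : a ∈ totS w K l)
    (hat : dist a (embL ι E₀ k t) < t) : ∃ u, 0 < u ∧ u ≤ l k ∧ a = embL ι E₀ k u := by
  obtain ⟨j, hj⟩ := Set.mem_iUnion.1 ha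
  have hmem : embL ι E₀ k t ∈ pieceS w K l (some k) := ⟨t, ⟨ht.le, htl⟩, rfl⟩
  by_cases hjk : j = some k
  · subst hjk
    obtain ⟨u, hu, rfl⟩ := hj
    refine ⟨u, ?_, hu.2, rfl⟩
    rw [dist_embL] at hat
    have := (abs_lt.1 hat).1
    linarith
  · rw [pieceS_dist j (some k) hjk a hj _ hmem, dist_comm 0, dist_embL_zero, abs_of_pos ht] at hat
    have := dist_nonneg (x := a) (y := 0)
    linarith

lemma embL_mem_totS {w : ι → ℝ} {K : ι → Set E₀} {l : ℕ → ℝ} {k : ℕ} {t : ℝ}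
    (ht : 0 ≤ t) (htl : t ≤ l k) : embL ι E₀ k t ∈ totS w K l :=
  Set.mem_iUnion.2 ⟨some k, ⟨t, ⟨ht, htl⟩, rfl⟩⟩

lemma embL_good {w : ι → ℝ} {K : ι → Set E₀} {l : ℕ → ℝ} {k : ℕ} {t : ℝ}
    (ht : 0 < t) (htl : t ≤ l k) :
    (⟨embL ι E₀ k t, embL_mem_totS ht.le htl⟩ : totS w K l) ∈ goodSet (totS w K l) := by
  refine ⟨t, ht, fun a => dist (a : AmbSp ι E₀) 0, ?_⟩
  rintro ⟨a, ha⟩ hat ⟨b, hb⟩ hbt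
  rw [Metric.mem_ball, Subtype.dist_eq] at hat hbt
  obtain ⟨u, hu, -, rfl⟩ := mem_leg_of_dist_lt ht htl ha hat
  obtain ⟨v, hv, -, rfl⟩ := mem_leg_of_dist_lt ht htl hb hbt
  rw [Subtype.dist_eq]
  simp only [dist_embL_zero, dist_embL, abs_of_pos hu, abs_of_pos hv]

lemma legInv_totS {w : ι → ℝ} {K : ι → Set E₀} {l : ℕ → ℝ} {s : ℝ} (hs : 0 < s)
    {i₀ i₁ : ι} (hi : i₀ ≠ i₁) (hw₀ : w i₀ = s) (hw₁ : w i₁ = s) {e : E₀} (he : ‖e‖ = 1)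
    (hK₀ : K i₀ = (fun t : ℝ => t • e) '' Set.Icc (0 : ℝ) 1)
    (hK₁ : K i₁ = (fun t : ℝ => t • e) '' Set.Icc (0 : ℝ) 1)
    (hK : ∀ i, 0 ∈ K i) (hl : ∀ k, 0 < l k) : legInv (totS w K l) = Set.range l := by
  have hbad := not_good_of_mem (l := l) hs hi hw₀ hw₁ he hK₀ hK₁
  have h0 := zero_mem_pieceS (w := w) (K := K) (l := l) hK (fun k => (hl k).le) none
  have h0t : (0 : AmbSp ι E₀) ∈ totS w K l := Set.mem_iUnion.2 ⟨none, h0⟩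
  have h0b : (⟨0, h0t⟩ : totS w K l) ∈ (goodSet (totS w K l))ᶜ := hbad _ h0
  have hform : ∀ z ∈ goodSet (totS w K l), ∃ k t, ∃ (h1 : 0 < t) (h2 : t ≤ l k),
      z = ⟨embL ι E₀ k t, embL_mem_totS h1.le h2⟩ := by
    rintro ⟨z, hz⟩ hg
    obtain ⟨j, hj⟩ := Set.mem_iUnion.1 hz
    cases j with
    | none => exact absurd hg (hbad _ hj)
    | some k =>
      obtain ⟨t, ht, rfl⟩ := hj
      rcases ht.1.eq_or_lt with h | h
      · subst h
        refine absurd hg (hbad _ ?_)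
        simp only [embL_zero]
        exact h0
      · exact ⟨k, t, h, ht.2, rfl⟩
  have hinf : ∀ (k : ℕ) (t : ℝ) (h1 : 0 < t) (h2 : t ≤ l k),
      Metric.infDist (⟨embL ι E₀ k t, embL_mem_totS h1.le h2⟩ : totS w K l)
        (goodSet (totS w K l))ᶜ = t := by
    intro k t h1 h2
    apply le_antisymm
    · refine (Metric.infDist_le_dist_of_mem h0b).trans (le_of_eq ?_)
      rw [Subtype.dist_eq]
      simp only
      rw [dist_embL_zero, abs_of_pos h1]
    · rw [Metric.le_infDist ⟨_, h0b⟩]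
      rintro ⟨y, hy⟩ hyb
      by_contra hlt
      push Not at hlt
      rw [dist_comm, Subtype.dist_eq] at hlt
      obtain ⟨u, hu, hul, rfl⟩ := mem_leg_of_dist_lt h1 h2 hy hlt
      exact hyb (embL_good hu hul)
  ext d
  constructor
  · rintro ⟨z, hz, hzd, r, hr, hmax⟩
    obtain ⟨k, t, h1, h2, rfl⟩ := hform z hz
    rw [hinf k t h1 h2] at hzd
    subst hzd
    refine ⟨k, ?_⟩
    by_contra hne
    have hlt : t < l k := lt_of_le_of_ne h2 (Ne.symm hne)
    have h3 : t < min (l k) (t + r / 2) := lt_min hlt (by linarith)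
    have h4 : min (l k) (t + r / 2) ≤ l k := min_le_left _ _
    have h5 : min (l k) (t + r / 2) ≤ t + r / 2 := min_le_right _ _
    have := hmax ⟨embL ι E₀ k (min (l k) (t + r / 2)), embL_mem_totS (h1.trans h3).le h4⟩
      (by
        rw [Metric.mem_ball, Subtype.dist_eq]
        simp only
        rw [dist_embL, abs_of_pos (by linarith)]
        linarith)
    rw [hinf k _ (h1.trans h3) h4] at this
    linarith
  · rintro ⟨k, rfl⟩
    refine ⟨_, embL_good (hl k) le_rfl, hinf k _ (hl k) le_rfl, l k, hl k, ?_⟩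
    rintro ⟨z, hz⟩ hzb
    rw [Metric.mem_ball, Subtype.dist_eq] at hzb
    obtain ⟨u, hu, hul, rfl⟩ := mem_leg_of_dist_lt (hl k) le_rfl hz hzb
    rw [hinf k u hu hul]
    exact hul

end Invariant


/-! ### Continuity -/

open TopologicalSpace in
/-- Ranges of continuous maps depend continuously on the map. -/
lemma exists_range_nonemptyCompacts {W Q E : Type*} [TopologicalSpace W] [TopologicalSpace Q]
    [CompactSpace Q] [Nonempty Q] [MetricSpace E] (Φ : W × Q → E) (hΦ : Continuous Φ) :
    ∃ Z : W → NonemptyCompacts E, Continuous Z ∧ 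
      ∀ x, (Z x : Set E) = Set.range (fun q => Φ (x, q)) := by
  let G : C(Q, E) → NonemptyCompacts E := fun f =>
    ⟨⟨Set.range f, isCompact_range f.continuous⟩, Set.range_nonempty f⟩
  have hG : LipschitzWith 1 G := by
    refine LipschitzWith.of_dist_le_mul fun f g => ?_
    rw [Metric.NonemptyCompacts.dist_eq]
    simp only [NNReal.coe_one, one_mul]
    refine Metric.hausdorffDist_le_of_mem_dist dist_nonneg ?_ ?_
    · rintro _ ⟨q, rfl⟩
      exact ⟨g q, ⟨q, rfl⟩, ContinuousMap.dist_apply_le_dist q⟩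
    · rintro _ ⟨q, rfl⟩
      refine ⟨f q, ⟨q, rfl⟩, ?_⟩
      rw [dist_comm]
      exact ContinuousMap.dist_apply_le_dist q
  let Ψ : C(W, C(Q, E)) := ContinuousMap.curry ⟨Φ, hΦ⟩
  exact ⟨fun x => G (Ψ x), hG.continuous.comp Ψ.continuous, fun x => rfl⟩

open TopologicalSpace in
lemma exists_continuous_totS {ι E₀ W : Type*} [Fintype ι] [NormedAddCommGroup E₀]
    [NormedSpace ℝ E₀] [CompleteSpace E₀] [TopologicalSpace W] (K : ι → Set E₀)
    (hKc : ∀ i, IsCompact (K i)) (hK : ∀ i, 0 ∈ K i) (w : W → ι → ℝ) (hw : Continuous w)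
    (l : W → ℕ → ℝ) (hl : ∀ k, Continuous fun x => l x k) (hl0 : ∀ x k, 0 ≤ l x k)
    (u : ℕ → ℝ) (hu : Summable u) (hlu : ∀ x k, l x k ≤ u k) :
    ∃ Z : W → NonemptyCompacts (AmbSp ι E₀), Continuous Z ∧ 
      ∀ x, (Z x : Set (AmbSp ι E₀)) = totS (w x) K (l x) := by
  classical
  have : ∀ i, CompactSpace (K i) := fun i => isCompact_iff_compactSpace.1 (hKc i)
  have : ∀ i, Nonempty (K i) := fun i => ⟨⟨0, hK i⟩⟩
  let Q₁ := (i : ι) → K i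
  let Q₂ := OnePoint ℕ × Set.Icc (0 : ℝ) 1
  let Φ₁ : W × Q₁ → AmbSp ι E₀ := fun q => embY (fun i => w q.1 i • (q.2 i : E₀))
  have hΦ₁ : Continuous Φ₁ := by
    refine continuous_embY.comp (continuous_pi fun i => ?_)
    refine Continuous.smul ?_ ?_
    · exact (continuous_apply i).comp (hw.comp continuous_fst)
    · exact continuous_subtype_val.comp ((continuous_apply i).comp continuous_snd)
  let χ : ℕ → OnePoint ℕ → ℝ := fun k => Set.indicator {(k : OnePoint ℕ)} 1
  have hχ : ∀ k, Continuous (χ k) := by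
    intro k
    have hop : IsOpen ({(k : OnePoint ℕ)} : Set (OnePoint ℕ)) := by
      have := OnePoint.isOpenEmbedding_coe.isOpenMap _ (isOpen_discrete ({k} : Set ℕ))
      simpa using this
    have hc : IsClopen ({(k : OnePoint ℕ)} : Set (OnePoint ℕ)) := ⟨isClosed_singleton, hop⟩
    refine Continuous.indicator ?_ continuous_const
    rw [hc.frontier_eq]
    simp
  let Φ₂ : W × Q₂ → AmbSp ι E₀ := fun q =>
    ∑' k, χ k q.2.1 • embL ι E₀ k ((q.2.2 : ℝ) * l q.1 k)
  have hΦ₂ : Continuous Φ₂ := by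
    refine continuous_tsum (u := u) ?_ hu ?_
    · intro k
      have a1 : Continuous fun q : W × Q₂ => χ k q.2.1 :=
        (hχ k).comp (continuous_fst.comp continuous_snd)
      have a2 : Continuous fun q : W × Q₂ => embL ι E₀ k ((q.2.2 : ℝ) * l q.1 k) := by
        refine (continuous_embL k).comp (Continuous.mul ?_ ?_)
        · exact continuous_subtype_val.comp (continuous_snd.comp continuous_snd)
        · exact (hl k).comp continuous_fst
      exact a1.smul a2
    · rintro k ⟨x, κ, ⟨t, ht⟩⟩
      rw [norm_smul, ← dist_zero_right (embL ι E₀ k _), dist_embL_zero]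
      have h1 : ‖χ k κ‖ ≤ 1 := by
        simp only [χ, Set.indicator]
        split_ifs <;> simp
      have h2 : |t * l x k| ≤ u k := by
        rw [abs_of_nonneg (mul_nonneg ht.1 (hl0 x k))]
        have := hl0 x k
        have := hlu x k
        nlinarith [ht.1, ht.2]
      calc ‖χ k κ‖ * |t * l x k| ≤ 1 * |t * l x k| := by gcongr
        _ ≤ u k := by rw [one_mul]; exact h2
  have eval1 : ∀ x (j : ℕ) t, Φ₂ (x, (j : OnePoint ℕ), t) = embL ι E₀ j ((t : ℝ) * l x j) := by
    intro x j t
    simp only [Φ₂]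
    rw [tsum_eq_single j]
    · simp [χ]
    · intro k hk
      have : χ k (j : OnePoint ℕ) = 0 := by
        simp [χ, Ne.symm hk]
      rw [this, zero_smul]
  have eval2 : ∀ x t, Φ₂ (x, OnePoint.infty, t) = 0 := by
    intro x t
    simp only [Φ₂]
    have : ∀ k, χ k OnePoint.infty = 0 := by
      intro k
      simp [χ]
    simp [this]
  let Φ : W × (Q₁ ⊕ Q₂) → AmbSp ι E₀ := Sum.elim Φ₁ Φ₂ ∘ Homeomorph.prodSumDistrib
  have hΦ : Continuous Φ := (hΦ₁.sumElim hΦ₂).comp Homeomorph.prodSumDistrib.continuous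
  obtain ⟨Z, hZ, hZr⟩ := exists_range_nonemptyCompacts Φ hΦ
  refine ⟨Z, hZ, fun x => ?_⟩
  rw [hZr]
  ext y
  constructor
  · rintro ⟨q | ⟨κ, t⟩, rfl⟩
    · exact Set.mem_iUnion.2 ⟨none, ⟨fun i => (q i : E₀), fun i _ => (q i).2, rfl⟩⟩
    · change Φ₂ (x, κ, t) ∈ _
      induction κ using OnePoint.rec with
      | infty =>
        rw [eval2]
        exact Set.mem_iUnion.2 ⟨none, zero_mem_pieceS hK (hl0 x) none⟩
      | coe j =>
        rw [eval1]
        refine embL_mem_totS (mul_nonneg t.2.1 (hl0 x j)) ?_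
        exact mul_le_of_le_one_left (hl0 x j) t.2.2
  · intro hy
    obtain ⟨j, hj⟩ := Set.mem_iUnion.1 hy
    cases j with
    | none =>
      obtain ⟨a, ha, rfl⟩ := hj
      exact ⟨Sum.inl (fun i => ⟨a i, ha i trivial⟩), rfl⟩
    | some k =>
      obtain ⟨t, ht, rfl⟩ := hj
      rcases (hl0 x k).eq_or_lt with h0 | h0
      · have ht0 : t = 0 := le_antisymm (h0 ▸ ht.2) ht.1
        refine ⟨Sum.inr (OnePoint.infty, ⟨0, by simp⟩), ?_⟩
        change Φ₂ (x, _, _) = _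
        rw [eval2, ht0, embL_zero]
      · refine ⟨Sum.inr ((k : OnePoint ℕ), ⟨t / l x k, div_nonneg ht.1 h0.le,
          (div_le_one h0).2 ht.2⟩), ?_⟩
        change Φ₂ (x, _, _) = _
        rw [eval1]
        simp only
        rw [div_mul_cancel₀ _ h0.ne']

/-! ### Transfer to the Gromov-Hausdorff space -/

lemma IsGeodesicSpace.congr {X Y : Type*} [MetricSpace X] [MetricSpace Y]
    (h : IsGeodesicSpace X) (e : X ≃ᵢ Y) : IsGeodesicSpace Y := by
  intro x y
  obtain ⟨γ, h0, h1, hd⟩ := h (e.symm x) (e.symm y)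
  refine ⟨fun t => e (γ t), by simp [h0], by simp [h1], ?_⟩
  intro s hs t ht
  rw [e.isometry.dist_eq, hd s hs t ht, e.symm.isometry.dist_eq]

lemma IsCAT0Space.congr {X Y : Type*} [MetricSpace X] [MetricSpace Y]
    (h : IsCAT0Space X) (e : X ≃ᵢ Y) : IsCAT0Space Y := by
  refine ⟨h.1.congr e, ?_⟩
  intro x y z γ h0 h1 hd t ht
  have := h.2 (e.symm x) (e.symm y) (e.symm z) (fun t => e.symm (γ t)) (by simp [h0])
    (by simp [h1]) (by simpa only [e.symm.isometry.dist_eq] using hd) t ht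
  simpa only [e.symm.isometry.dist_eq] using this

open TopologicalSpace in
lemma rep_equiv {E : Type*} [MetricSpace E] (Z : NonemptyCompacts E) (A : Set E)
    (h : (Z : Set E) = A) : Nonempty (A ≃ᵢ Z.toGHSpace.Rep) := by
  subst h
  have := Z.toGHSpace.toGHSpace_rep
  have h : Nonempty (Z ≃ᵢ Z.toGHSpace.Rep) :=
    toGHSpace_eq_toGHSpace_iff_isometryEquiv.1 this.symm
  exact h

open TopologicalSpace in
lemma toGHSpace_eq_of_isometry {E X : Type*} [MetricSpace E] [MetricSpace X] [CompactSpace X]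
    [Nonempty X] (Z : NonemptyCompacts E) (g : X → E) (hg : Isometry g)
    (h : (Z : Set E) = Set.range g) : Z.toGHSpace = toGHSpace X := by
  refine toGHSpace_eq_toGHSpace_iff_isometryEquiv.2 ?_
  have e := hg.isometryEquivOnRange
  rw [← h] at e
  exact ⟨e.symm⟩

/-- The factors: translated Kuratowski images of the given spaces and two segments. -/
noncomputable def facS {E₀ : Type*} [NormedAddCommGroup E₀] [NormedSpace ℝ E₀] (e : E₀)
    {n : ℕ} {X : Fin (n + 1) → Type} (κ : ∀ i, X i → E₀) : Fin (n + 1) ⊕ Fin 2 → Set E₀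
  | Sum.inl i => Set.range (κ i)
  | Sum.inr _ => (fun t : ℝ => t • e) '' Set.Icc (0 : ℝ) 1

open TopologicalSpace in
lemma mem_class {E₀ : Type*} [NormedAddCommGroup E₀] [NormedSpace ℝ E₀] {e : E₀} (he : ‖e‖ = 1)
    (S : Set GHSpace)
    (hS : S = GHConnected ∨ S = GHPathConnected ∨ S = GHGeodesic ∨ S = GHCat0)
    {n : ℕ} (p : Fin (n + 1) → GHSpace) (hp : ∀ i, p i ∈ S)
    (κ : ∀ i, (p i).Rep → E₀) (hκ : ∀ i, Isometry (κ i)) (hK : ∀ j, 0 ∈ facS e κ j)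
    (w : Fin (n + 1) ⊕ Fin 2 → ℝ) (l : ℕ → ℝ) (hl : ∀ k, 0 ≤ l k)
    (Z : NonemptyCompacts (AmbSp (Fin (n + 1) ⊕ Fin 2) E₀))
    (hZ : (Z : Set (AmbSp (Fin (n + 1) ⊕ Fin 2) E₀)) = totS w (facS e κ) l) :
    Z.toGHSpace ∈ S := by
  obtain ⟨E⟩ := rep_equiv Z _ hZ
  have hseg : Isometry (fun t : ℝ => t • e) := by
    refine Isometry.of_dist_eq fun t u => ?_
    rw [dist_eq_norm, ← sub_smul, norm_smul, he, mul_one, Real.norm_eq_abs, Real.dist_eq]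
  rcases hS with rfl | rfl | rfl | rfl
  · have h : IsConnected (totS w (facS e κ) l) := by
      refine isConnected_totS ?_ hK hl
      rintro (i | i)
      · have : ConnectedSpace (p i).Rep := hp i
        exact isConnected_range (hκ i).continuous
      · exact (isConnected_Icc zero_le_one).image _ hseg.continuous.continuousOn
    have := isConnected_iff_connectedSpace.1 h
    exact E.surjective.connectedSpace E.continuous
  · have h : IsPathConnected (totS w (facS e κ) l) := by
      refine isPathConnected_totS ?_ hK hl
      rintro (i | i)
      · have : PathConnectedSpace (p i).Rep := hp i
        exact isPathConnected_range (hκ i).continuous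
      · exact IsPathConnected.image ((convex_Icc (0 : ℝ) 1).isPathConnected ⟨0, by simp⟩)
          hseg.continuous
    have := isPathConnected_iff_pathConnectedSpace.1 h
    exact E.surjective.pathConnectedSpace E.continuous
  · have h : GeoSet False (totS w (facS e κ) l) := by
      refine geoSet_totS ?_ hK hl
      rintro (i | i)
      · exact IsGeodesicSpace.geoSet (hp i) (hκ i)
      · exact (geoSet_Icc _ 0 1).image hseg
    exact h.isGeodesicSpace.congr E
  · have h : GeoSet True (totS w (facS e κ) l) := by
      refine geoSet_totS ?_ hK hl
      rintro (i | i)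
      · exact IsCAT0Space.geoSet (hp i) (hκ i)
      · exact (geoSet_Icc _ 0 1).image hseg
    exact h.isCAT0Space.congr E

open TopologicalSpace in
lemma vertex_eq {E₀ : Type*} [NormedAddCommGroup E₀] [NormedSpace ℝ E₀] {e : E₀}
    {n : ℕ} (p : Fin (n + 1) → GHSpace)
    (κ : ∀ i, (p i).Rep → E₀) (hκ : ∀ i, Isometry (κ i)) (hK : ∀ j, 0 ∈ facS e κ j)
    (w : Fin (n + 1) ⊕ Fin 2 → ℝ) (l : ℕ → ℝ) (hl : ∀ k, l k = 0) (i : Fin (n + 1))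
    (hw : w (Sum.inl i) = 1) (hw' : ∀ j, j ≠ Sum.inl i → w j = 0)
    (Z : NonemptyCompacts (AmbSp (Fin (n + 1) ⊕ Fin 2) E₀))
    (hZ : (Z : Set (AmbSp (Fin (n + 1) ⊕ Fin 2) E₀)) = totS w (facS e κ) l) :
    Z.toGHSpace = p i := by
  let g : (p i).Rep → AmbSp (Fin (n + 1) ⊕ Fin 2) E₀ := fun a =>
    embY (fun j => w j • κ i a)
  have hg : Isometry g := by
    refine Isometry.of_dist_eq fun a b => ?_
    rw [← abs_of_nonneg (dist_nonneg (x := g a) (y := g b)),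
      ← abs_of_nonneg (dist_nonneg (x := a) (y := b)), ← sq_eq_sq_iff_abs_eq_abs, dist_embY_sq,
      Finset.sum_eq_single (Sum.inl i)]
    · rw [hw, one_smul, one_smul, (hκ i).dist_eq]
    · intro j _ hj
      rw [hw' j hj]; simp
    · simp
  have hr : (Z : Set (AmbSp (Fin (n + 1) ⊕ Fin 2) E₀)) = Set.range g := by
    rw [hZ]
    have hnone : ∀ y ∈ pieceS w (facS e κ) l none, y ∈ Set.range g := by
      rintro _ ⟨a, ha, rfl⟩
      obtain ⟨b, hb⟩ : a (Sum.inl i) ∈ Set.range (κ i) := ha (Sum.inl i) trivial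
      refine ⟨b, ?_⟩
      simp only [g]
      congr 1
      funext j
      by_cases hj : j = Sum.inl i
      · subst hj; rw [hb]
      · rw [hw' j hj, zero_smul, zero_smul]
    ext y
    constructor
    · intro hy
      obtain ⟨k, hk⟩ := Set.mem_iUnion.1 hy
      cases k with
      | none => exact hnone y hk
      | some k =>
        obtain ⟨t, ht, rfl⟩ := hk
        have ht0 : t = 0 := le_antisymm (hl k ▸ ht.2) ht.1
        rw [ht0, embL_zero]
        exact hnone 0 (zero_mem_pieceS hK (fun k => (hl k).ge) none)
    · rintro ⟨a, rfl⟩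
      classical
      refine Set.mem_iUnion.2 ⟨none, ⟨Function.update 0 (Sum.inl i) (κ i a), ?_, ?_⟩⟩
      · intro j _
        by_cases hj : j = Sum.inl i
        · subst hj
          rw [Function.update_self]
          exact ⟨a, rfl⟩
        · rw [Function.update_of_ne hj]
          exact hK j
      · simp only [g]
        congr 1
        funext j
        by_cases hj : j = Sum.inl i
        · subst hj; rw [Function.update_self]
        · rw [hw' j hj, zero_smul, zero_smul]
  rw [toGHSpace_eq_of_isometry Z g hg hr, (p i).toGHSpace_rep]

open TopologicalSpace in
lemma leg_eq_of_eq {ι E₀ : Type*} [Fintype ι] [NormedAddCommGroup E₀] [NormedSpace ℝ E₀]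
    {w w' : ι → ℝ} {K : ι → Set E₀} {l l' : ℕ → ℝ} {s s' : ℝ} (hs : 0 < s) (hs' : 0 < s')
    {i₀ i₁ : ι} (hi : i₀ ≠ i₁) (hw₀ : w i₀ = s) (hw₁ : w i₁ = s)
    (hw₀' : w' i₀ = s') (hw₁' : w' i₁ = s') {e : E₀} (he : ‖e‖ = 1)
    (hK₀ : K i₀ = (fun t : ℝ => t • e) '' Set.Icc (0 : ℝ) 1)
    (hK₁ : K i₁ = (fun t : ℝ => t • e) '' Set.Icc (0 : ℝ) 1)
    (hK : ∀ i, 0 ∈ K i) (hl : ∀ k, 0 < l k) (hl' : ∀ k, 0 < l' k)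
    (ha : StrictAnti l) (ha' : StrictAnti l')
    (Z Z' : NonemptyCompacts (AmbSp ι E₀))
    (hZ : (Z : Set (AmbSp ι E₀)) = totS w K l) (hZ' : (Z' : Set (AmbSp ι E₀)) = totS w' K l')
    (h : Z.toGHSpace = Z'.toGHSpace) : l = l' := by
  obtain ⟨e₁⟩ := rep_equiv Z _ hZ
  obtain ⟨e₂⟩ := rep_equiv Z' _ hZ'
  rw [← h] at e₂
  have h1 := legInv_congr (e₁.trans e₂.symm)
  rw [legInv_totS hs hi hw₀ hw₁ he hK₀ hK₁ hK hl,
    legInv_totS hs' hi hw₀' hw₁' he hK₀ hK₁ hK hl'] at h1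
  have h2 : Set.range (fun k => - l k) = Set.range (fun k => - l' k) := by
    have := congrArg (fun A : Set ℝ => (fun t => -t) '' A) h1
    simpa only [← Set.range_comp, Function.comp_def] using this
  have h3 := (StrictMono.range_inj (f := fun k => - l k) (g := fun k => - l' k)
    (fun a b hab => neg_lt_neg (ha hab)) (fun a b hab => neg_lt_neg (ha' hab))).1 h2
  funext k
  have := congrFun h3 k
  simpa using this


lemma strictAnti_legs {s : ℝ} (hs : 0 < s) (g : ℕ → ℝ) (h0 : ∀ k, 0 ≤ g k) (h1 : ∀ k, g k ≤ 1) :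
    StrictAnti (fun k => s * (1 / 4 : ℝ) ^ k * (1 + g k)) := by
  refine strictAnti_nat_of_succ_lt fun k => ?_
  have hp : 0 < s * (1 / 4 : ℝ) ^ k := by positivity
  rw [pow_succ]
  have a := h0 k
  have b := h1 (k + 1)
  have c := h0 (k + 1)
  nlinarith [mul_nonneg hp.le a, mul_le_mul_of_nonneg_left b hp.le]


/-- Let `𝒮` be any one of `𝒞`, `𝒫`, `𝒢`, `𝒵`.  Let
`n ≥ 1`, `m ≥ 2`, let `H` be a compact metrizable space with `n+1` distinct
points `v 0, …, v n`, and let `H^× = H \ range v`.  Let `p 0, …, p n ∈ 𝒮`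
have positive pairwise Gromov–Hausdorff distances.  Then there is a continuous
map `F : H × Fin m → 𝒮` (with `Fin m` discrete) such that `F (v i, j) = p i`
for all `i, j`, and `F` is injective on `H^× × Fin m`. -/
theorem statement17 (S : Set GHSpace)
    (hS : S = GHConnected ∨ S = GHPathConnected ∨ S = GHGeodesic ∨ S = GHCat0)
    {H : Type*} [TopologicalSpace H] [CompactSpace H]
    [TopologicalSpace.MetrizableSpace H]
    (n m : ℕ) (hn : 1 ≤ n) (hm : 2 ≤ m)
    (v : Fin (n + 1) → H) (hv : Function.Injective v)
    (p : Fin (n + 1) → GHSpace) (hp : ∀ i, p i ∈ S)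
    (hdist : ∀ i j, i ≠ j → 0 < dist (p i) (p j)) :
    ∃ F : H × Fin m → GHSpace,
      Continuous F ∧
      (∀ x, F x ∈ S) ∧
      (∀ i j, F (v i, j) = p i) ∧
      Set.InjOn F (((Set.range v)ᶜ) ×ˢ (Set.univ : Set (Fin m))) := by
  classical
  letI : MetricSpace H := TopologicalSpace.metrizableSpaceMetric H
  -- the scale function and the weights
  let s : H → ℝ := fun h => ∏ i, dist h (v i)
  have hs : Continuous s := continuous_finsetProd _ fun i _ => continuous_id.dist continuous_const
  have hs0 : ∀ h, 0 ≤ s h := fun h => Finset.prod_nonneg fun i _ => dist_nonneg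
  have hsv : ∀ i, s (v i) = 0 := fun i => Finset.prod_eq_zero (Finset.mem_univ i) (dist_self _)
  have hspos : ∀ h, h ∉ Set.range v → 0 < s h := by
    intro h hh
    refine Finset.prod_pos fun i _ => dist_pos.2 ?_
    rintro rfl
    exact hh ⟨i, rfl⟩
  let u : Fin (n + 1) → H → ℝ := fun i h =>
    ∏ j ∈ Finset.univ.erase i, (dist h (v j) / dist (v i) (v j))
  have hu : ∀ i, Continuous (u i) := fun i =>
    continuous_finsetProd _ fun j _ => (continuous_id.dist continuous_const).div_const _
  have hu1 : ∀ i, u i (v i) = 1 := by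
    intro i
    refine Finset.prod_eq_one fun j hj => div_self ?_
    exact (dist_pos.2 fun h => (Finset.ne_of_mem_erase hj) (hv h).symm).ne'
  have hu0 : ∀ i k, k ≠ i → u i (v k) = 0 := by
    intro i k hk
    exact Finset.prod_eq_zero (Finset.mem_erase.2 ⟨hk, Finset.mem_univ k⟩) (by simp)
  obtain ⟨C, hC⟩ := (isCompact_univ (X := H)).exists_bound_of_continuousOn hs.continuousOn
  -- embedding into the Hilbert cube
  letI : MetricSpace (H × Fin m) := TopologicalSpace.metrizableSpaceMetric (H × Fin m)
  obtain ⟨f, hf⟩ := Metric.PiNatEmbed.exists_embedding_to_hilbert_cube (X := H × Fin m)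
  let g : H × Fin m → ℕ → ℝ := fun x k => Nat.casesOn k 0 (fun k => (f x k : ℝ))
  have hg0 : ∀ x k, 0 ≤ g x k := by
    intro x k
    cases k with
    | zero => exact le_rfl
    | succ k => exact (f x k).2.1
  have hg1 : ∀ x k, g x k ≤ 1 := by
    intro x k
    cases k with
    | zero => exact zero_le_one
    | succ k => exact (f x k).2.2
  have hgc : ∀ k, Continuous fun x => g x k := by
    intro k
    cases k with
    | zero => exact continuous_const
    | succ k => exact continuous_subtype_val.comp ((continuous_apply k).comp hf.continuous)
  let l : H × Fin m → ℕ → ℝ := fun x k => s x.1 * (1 / 4 : ℝ) ^ k * (1 + g x k)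
  have hl0 : ∀ x k, 0 ≤ l x k := by
    intro x k
    have := hs0 x.1
    have := hg0 x k
    positivity
  let w : H × Fin m → Fin (n + 1) ⊕ Fin 2 → ℝ := fun x =>
    Sum.elim (fun i => u i x.1) (fun _ => s x.1)
  have hw : Continuous w := by
    refine continuous_pi ?_
    rintro (i | i)
    · exact (hu i).comp continuous_fst
    · exact hs.comp continuous_fst
  -- the factors
  let κ : ∀ i, (p i).Rep → lp (fun _ : ℕ => ℝ) ⊤ := fun i a =>
    kuratowskiEmbedding (p i).Rep a - kuratowskiEmbedding (p i).Rep (Classical.arbitrary _)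
  have hκ : ∀ i, Isometry (κ i) := by
    intro i
    refine Isometry.of_dist_eq fun a b => ?_
    simp only [κ, dist_sub_right]
    exact (kuratowskiEmbedding.isometry _).dist_eq a b
  let e : lp (fun _ : ℕ => ℝ) ⊤ := 1
  have he : ‖e‖ = 1 := norm_one
  have hK : ∀ j, 0 ∈ facS e κ j := by
    rintro (i | i)
    · exact ⟨Classical.arbitrary _, by simp [κ]⟩
    · exact ⟨0, by simp, by simp⟩
  have hKc : ∀ j, IsCompact (facS e κ j) := by
    rintro (i | i)
    · exact isCompact_range (hκ i).continuous
    · exact isCompact_Icc.image (by fun_prop)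
  obtain ⟨Z, hZ, hZt⟩ := exists_continuous_totS (facS e κ) hKc hK w hw l
    (fun k => ((hs.comp continuous_fst).mul continuous_const).mul (continuous_const.add (hgc k)))
    hl0 (fun k => C * (1 / 4 : ℝ) ^ k * 2)
    (((summable_geometric_of_lt_one (by norm_num) (by norm_num)).mul_left C).mul_right 2)
    (by
      intro x k
      have h1 : s x.1 ≤ C := (le_abs_self _).trans (hC x.1 trivial)
      have h2 := hg1 x k
      have h3 := hg0 x k
      have h4 := hs0 x.1
      have h5 : 1 + g x k ≤ 2 := by linarith
      have h6 : 0 ≤ C := h4.trans h1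
      simp only [l]
      gcongr)
  refine ⟨fun x => (Z x).toGHSpace, toGHSpace_continuous.comp hZ, ?_, ?_, ?_⟩
  · intro x
    exact mem_class he S hS p hp κ hκ hK (w x) (l x) (hl0 x) (Z x) (hZt x)
  · intro i j
    refine vertex_eq p κ hκ hK (w (v i, j)) (l (v i, j)) ?_ i ?_ ?_ (Z (v i, j)) (hZt _)
    · intro k
      simp [l, hsv]
    · exact hu1 i
    · rintro (k | k) hk
      · exact hu0 k i (fun h => hk (by rw [h]))
      · exact hsv i
  · rintro x ⟨hx, -⟩ y ⟨hy, -⟩ hxy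
    have hsx := hspos x.1 hx
    have hsy := hspos y.1 hy
    have hlp : ∀ z : H × Fin m, 0 < s z.1 → ∀ k, 0 < l z k := by
      intro z hz k
      have := hg0 z k
      positivity
    have hll : l x = l y :=
      leg_eq_of_eq (i₀ := Sum.inr 0) (i₁ := Sum.inr 1) (w := w x) (w' := w y) (K := facS e κ)
        hsx hsy (by simp) rfl rfl rfl rfl he rfl rfl hK (hlp x hsx) (hlp y hsy)
        (strictAnti_legs hsx _ (hg0 x) (hg1 x)) (strictAnti_legs hsy _ (hg0 y) (hg1 y))
        (Z x) (Z y) (hZt x) (hZt y) hxy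
    have h0 : s x.1 = s y.1 := by
      have := congrFun hll 0
      simpa [l, g] using this
    apply hf.injective
    funext k
    apply Subtype.ext
    have h1 := congrFun hll (k + 1)
    simp only [l] at h1
    rw [h0] at h1
    have hne : s y.1 * (1 / 4 : ℝ) ^ (k + 1) ≠ 0 := by positivity
    have h2 := mul_left_cancel₀ hne h1
    have h3 : g x (k + 1) = g y (k + 1) := by linarith
    exact h3
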